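/- Let G be a group acting ergodically on a probability space (X,μ), Δ a countable group, and w₁, w₂ : G × X → Δ cocycles with uniform distance d(w₁,w₂) < 1/8. Then there exists a measurable map φ : X → Δ with μ({x : φ(x) = 1}) > 3/4 such that for every g ∈ G, w₁(g,x) = φ(g·x) w₂(g,x) φ(x)⁻¹ for almost every x ∈ X. -/

import Mathlib

open MeasureTheory

/-- If a set is preserved by a family of linear isometries of a real Hilbert space, then the family
has a common fixed vector in the closed convex hull of the set. -/
theorem exists_mem_closedConvexHull_forall_fixed {ι H : Type*} [NormedAddCommGroup H]
    [InnerProductSpace ℝ H] [CompleteSpace H] (U : ι → H →ₗᵢ[ℝ] H) {s : Set H}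
    (hs : s.Nonempty) (hU : ∀ i, Set.MapsTo (U i) s s) :
    ∃ v ∈ closedConvexHull ℝ s, ∀ i, U i v = v := by
  have hconv : Convex ℝ (closedConvexHull ℝ s) := convex_closedConvexHull
  obtain ⟨v, hv, hmin⟩ := exists_norm_eq_iInf_of_complete_convex
    (hs.mono subset_closedConvexHull) isClosed_closedConvexHull.isComplete hconv 0
  refine ⟨v, hv, fun i => ?_⟩
  have hmaps : closedConvexHull ℝ s ⊆ U i ⁻¹' closedConvexHull ℝ s :=
    closedConvexHull_min (fun x hx => subset_closedConvexHull (hU i hx))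
      (hconv.linear_preimage (U i).toLinearMap)
      (isClosed_closedConvexHull.preimage (U i).continuous)
  by_contra hne
  have hlt := norm_combo_lt_of_ne ((U i).norm_map v).le le_rfl hne
    (by norm_num : (0 : ℝ) < 1 / 2) (by norm_num : (0 : ℝ) < 1 / 2) (by norm_num)
  have hmem := hconv (hmaps hv) hv (by norm_num : (0 : ℝ) ≤ 1 / 2)
    (by norm_num : (0 : ℝ) ≤ 1 / 2) (by norm_num)
  have hle := ciInf_le (f := fun w : closedConvexHull ℝ s => ‖0 - (w : H)‖)
    ⟨0, Set.forall_mem_range.2 fun _ => norm_nonneg _⟩ ⟨_, hmem⟩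
  rw [← hmin] at hle
  simp only [zero_sub, norm_neg] at hle
  exact absurd hlt hle.not_gt

section ProdCount

variable {X Δ : Type*} [MeasurableSpace X] [Countable Δ] [MeasurableSpace Δ]
  [MeasurableSingletonClass Δ] (μ : Measure X)

theorem prod_count_prod_singleton (A : Set X) (δ : Δ) :
    (μ.prod Measure.count) (A ×ˢ {δ}) = μ A := by
  simp [Measure.prod_prod]

theorem prod_count_graph_inter {u : X → Δ} (hu : Measurable u) {A : Set X}
    (hA : MeasurableSet A) (S : Set Δ) :
    (μ.prod Measure.count) ({p : X × Δ | p.2 = u p.1} ∩ A ×ˢ S) = μ (A ∩ u ⁻¹' S) := by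
  have hgraph : MeasurableSet {p : X × Δ | p.2 = u p.1} :=
    measurableSet_eq_fun measurable_snd (hu.comp measurable_fst)
  rw [Measure.prod_apply (hgraph.inter (hA.prod S.to_countable.measurableSet)),
    ← lintegral_indicator_one (hA.inter (hu S.to_countable.measurableSet))]
  refine lintegral_congr fun x => ?_
  by_cases hx : x ∈ A ∩ u ⁻¹' S
  · have : Prod.mk x ⁻¹' ({p : X × Δ | p.2 = u p.1} ∩ A ×ˢ S) = {u x} := by
      ext δ
      simp only [Set.mem_inter_iff, Set.mem_preimage] at hx
      simp only [Set.mem_preimage, Set.mem_inter_iff, Set.mem_ofPred_eq, Set.mem_prod,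
        Set.mem_singleton_iff]
      exact ⟨fun h => h.1, fun h => ⟨h, hx.1, h ▸ hx.2⟩⟩
    rw [this, Set.indicator_of_mem hx, Measure.count_singleton, Pi.one_apply]
  · have : Prod.mk x ⁻¹' ({p : X × Δ | p.2 = u p.1} ∩ A ×ˢ S) = ∅ := by
      ext δ
      simp only [Set.mem_inter_iff, Set.mem_preimage] at hx
      simp only [Set.mem_preimage, Set.mem_inter_iff, Set.mem_ofPred_eq, Set.mem_prod,
        Set.mem_empty_iff_false, iff_false]
      exact fun h => hx ⟨h.2.1, h.1 ▸ h.2.2⟩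
    rw [this, Set.indicator_of_notMem hx, measure_empty]

theorem measurePreserving_prodMk_count [SFinite μ] (δ : Δ) :
    MeasurePreserving (fun x : X => (x, δ)) μ
      ((μ.prod Measure.count).restrict (Set.univ ×ˢ {δ})) := by
  refine ⟨measurable_prodMk_right, ?_⟩
  rw [← Measure.prod_restrict, Measure.restrict_univ, Measure.restrict_singleton,
    Measure.count_singleton, one_smul, Measure.prod_dirac]

variable {μ}

theorem integrable_section_prod_count [IsFiniteMeasure μ]
    (F : Lp ℝ 2 (μ.prod (Measure.count : Measure Δ))) (δ : Δ) :
    Integrable (fun x => F (x, δ)) μ :=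
  (measurePreserving_prodMk_count μ δ).integrable_comp_of_integrable
    (integrableOn_Lp_of_measure_ne_top F fact_one_le_two_ennreal.elim
      (by rw [prod_count_prod_singleton]; exact measure_ne_top _ _))

theorem setIntegral_prod_singleton_count [SFinite μ]
    (F : Lp ℝ 2 (μ.prod (Measure.count : Measure Δ))) (A : Set X) (δ : Δ) :
    ∫ p in A ×ˢ {δ}, F p ∂(μ.prod Measure.count) = ∫ x in A, F (x, δ) ∂μ := by
  have hmap : (μ.prod (Measure.count : Measure Δ)).restrict (A ×ˢ {δ}) =
      (μ.restrict A).map fun x => (x, δ) := by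
    rw [← Measure.prod_restrict, Measure.restrict_singleton,
      Measure.count_singleton, one_smul, Measure.prod_dirac]
  rw [hmap, integral_map measurable_prodMk_right.aemeasurable
    (Lp.stronglyMeasurable F).aestronglyMeasurable]

end ProdCount

section Cocycle

variable {G X Δ : Type*} [Group G] [Group Δ] [MulAction G X]

/-- The skew product action on `X × Δ` in which two cocycles act on the fibre from the two
sides. -/
def cocycleSkew (w₁ w₂ : G → X → Δ) (g : G) (p : X × Δ) : X × Δ :=
  (g • p.1, w₁ g p.1 * p.2 * (w₂ g p.1)⁻¹)

theorem cocycleSkew_mul {w₁ w₂ : G → X → Δ}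
    (hw₁ : ∀ (g h : G) (x : X), w₁ (g * h) x = w₁ g (h • x) * w₁ h x)
    (hw₂ : ∀ (g h : G) (x : X), w₂ (g * h) x = w₂ g (h • x) * w₂ h x) (g h : G) :
    cocycleSkew w₁ w₂ (g * h) = cocycleSkew w₁ w₂ g ∘ cocycleSkew w₁ w₂ h := by
  funext p
  simp only [cocycleSkew, Function.comp_apply, hw₁, hw₂, mul_smul, mul_inv_rev, mul_assoc]

variable [Countable Δ] [MeasurableSpace Δ] [MeasurableSingletonClass Δ] [MeasurableSpace X]
  {μ : Measure X} [IsProbabilityMeasure μ]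

theorem measurePreserving_cocycleSkew {w₁ w₂ : G → X → Δ} {g : G}
    (hG : MeasurePreserving (fun x : X => g • x) μ μ)
    (hw₁ : Measurable (w₁ g)) (hw₂ : Measurable (w₂ g)) :
    MeasurePreserving (cocycleSkew w₁ w₂ g) (μ.prod Measure.count) (μ.prod Measure.count) := by
  refine hG.skew_product (g := fun x δ => w₁ g x * δ * (w₂ g x)⁻¹) ?_ (.of_forall fun x => ?_)
  · refine measurable_from_prod_countable_left fun δ => ?_
    exact (hw₁.mul_const δ).mul hw₂.inv
  · exact ((measurePreserving_mul_right Measure.count (w₂ g x)⁻¹).comp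
      (measurePreserving_mul_left Measure.count (w₁ g x))).map_eq

/-- Two uniformly close cocycles admit a function on `X × Δ`, invariant under the skew product
action, whose fibres have mass at most one and concentrate near the identity. -/
theorem exists_invariant_of_cocycle_close
    (hG : ∀ g : G, MeasurePreserving (fun x : X => g • x) μ μ) {w₁ w₂ : G → X → Δ}
    (hw₁meas : ∀ g : G, Measurable (w₁ g)) (hw₂meas : ∀ g : G, Measurable (w₂ g))
    (hw₁ : ∀ (g h : G) (x : X), w₁ (g * h) x = w₁ g (h • x) * w₁ h x)
    (hw₂ : ∀ (g h : G) (x : X), w₂ (g * h) x = w₂ g (h • x) * w₂ h x)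
    {c : ℝ} (hc : ∀ g, c ≤ μ.real {x | w₁ g x = w₂ g x}) :
    ∃ f : X → Δ → ℝ, (∀ δ, Measurable fun x => f x δ) ∧ (∀ δ, Integrable (fun x => f x δ) μ) ∧
      (∀ g, ∀ᵐ x ∂μ, ∀ δ, f (g • x) (w₁ g x * δ * (w₂ g x)⁻¹) = f x δ) ∧
      (∀ᵐ x ∂μ, ∀ δ, f x δ ≤ 1) ∧
      (∀ᵐ x ∂μ, ∀ δ ε, δ ≠ ε → f x δ + f x ε ≤ 1) ∧ c ≤ ∫ x, f x 1 ∂μ := by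
  set ν : Measure (X × Δ) := μ.prod Measure.count with hν
  have hT g := measurePreserving_cocycleSkew (hG g) (hw₁meas g) (hw₂meas g)
  let E : Set (X × Δ) := Set.univ ×ˢ {1}
  have hE : MeasurableSet E := MeasurableSet.univ.prod (measurableSet_singleton 1)
  have hνE : ν E ≠ ⊤ := by
    rw [hν, prod_count_prod_singleton]; exact measure_ne_top _ _
  let ξ : Lp ℝ 2 ν := indicatorConstLp 2 hE hνE 1
  let U : G → Lp ℝ 2 ν →ₗᵢ[ℝ] Lp ℝ 2 ν := fun g => Lp.compMeasurePreservingₗᵢ ℝ _ (hT g)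
  obtain ⟨F, hF, hfix⟩ := exists_mem_closedConvexHull_forall_fixed U
    (Set.range_nonempty fun g => U g ξ) (by
      rintro h _ ⟨g, rfl⟩
      refine ⟨g * h, ?_⟩
      have := Lp.compMeasurePreserving_comp_apply ξ (hT g) (hT h)
      simp only [← cocycleSkew_mul hw₁ hw₂] at this
      exact this)
  have hpre g : cocycleSkew w₁ w₂ g ⁻¹' E = {p | p.2 = (w₁ g p.1)⁻¹ * w₂ g p.1} := by
    ext p
    simp only [E, cocycleSkew, Set.mem_preimage, Set.mem_prod, Set.mem_univ, true_and,
      Set.mem_singleton_iff, Set.mem_ofPred_eq]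
    rw [mul_inv_eq_one, eq_inv_mul_iff_mul_eq]
  have horbit g {A : Set X} (hA : MeasurableSet A) (S : Set Δ) :
      ∫ p in A ×ˢ S, U g ξ p ∂ν = μ.real (A ∩ (fun x => (w₁ g x)⁻¹ * w₂ g x) ⁻¹' S) := by
    have hU : U g ξ = indicatorConstLp 2 (hE.preimage (hT g).measurable)
        (by rwa [(hT g).measure_preimage hE.nullMeasurableSet]) 1 := rfl
    rw [hU, setIntegral_indicatorConstLp (hA.prod S.to_countable.measurableSet), smul_eq_mul,
      mul_one, measureReal_def, hpre]
    exact congrArg ENNReal.toReal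
      (prod_count_graph_inter μ ((hw₁meas g).inv.mul (hw₂meas g)) hA S)
  have hle {B : Set (X × Δ)} (hB : MeasurableSet B) (hνB : ν B ≠ ⊤) {a : ℝ}
      (h : ∀ g, ∫ p in B, U g ξ p ∂ν ≤ a) : ∫ p in B, F p ∂ν ≤ a := by
    simp_rw [← L2.inner_indicatorConstLp_one (𝕜 := ℝ) hB hνB] at h ⊢
    exact closedConvexHull_min (t := {v | innerSL ℝ (indicatorConstLp 2 hB hνB (1 : ℝ)) v ≤ a})
      (Set.range_subset_iff.2 h)
      (convex_halfSpace_le (innerSL ℝ _).toLinearMap.isLinear a)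
      (isClosed_le (innerSL ℝ _).continuous continuous_const) hF
  have hge {B : Set (X × Δ)} (hB : MeasurableSet B) (hνB : ν B ≠ ⊤) {a : ℝ}
      (h : ∀ g, a ≤ ∫ p in B, U g ξ p ∂ν) : a ≤ ∫ p in B, F p ∂ν := by
    simp_rw [← L2.inner_indicatorConstLp_one (𝕜 := ℝ) hB hνB] at h ⊢
    exact closedConvexHull_min (t := {v | a ≤ innerSL ℝ (indicatorConstLp 2 hB hνB (1 : ℝ)) v})
      (Set.range_subset_iff.2 h)
      (convex_halfSpace_ge (innerSL ℝ _).toLinearMap.isLinear a)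
      (isClosed_le continuous_const (innerSL ℝ _).continuous) hF
  have hint := integrable_section_prod_count F
  have hfin (A : Set X) (δ : Δ) : ν (A ×ˢ {δ}) ≠ ⊤ := by
    rw [hν, prod_count_prod_singleton]; exact measure_ne_top _ _
  refine ⟨fun x δ => F (x, δ), fun δ => (Lp.stronglyMeasurable F).measurable.comp
    measurable_prodMk_right, hint, fun g => ?_, ?_, ?_, ?_⟩
  · have h := Lp.coeFn_compMeasurePreserving F (hT g)
    rw [show Lp.compMeasurePreserving _ (hT g) F = F from hfix g] at h
    filter_upwards [Measure.ae_ae_of_ae_prod h] with x hx δ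
    exact (Measure.ae_count_iff.1 hx δ).symm
  · refine ae_all_iff.2 fun δ => ae_le_of_forall_setIntegral_le (hint δ) (integrable_const 1)
      fun A hA _ => ?_
    rw [← setIntegral_prod_singleton_count F A, setIntegral_const, smul_eq_mul, mul_one]
    exact hle (hA.prod (measurableSet_singleton δ)) (hfin A δ) fun g =>
      (horbit g hA _).trans_le (measureReal_mono Set.inter_subset_left)
  · refine ae_all_iff.2 fun δ => ae_all_iff.2 fun ε => ?_
    by_cases hne : δ = ε
    · exact .of_forall fun _ h => absurd hne h
    have key : (fun x => F (x, δ) + F (x, ε)) ≤ᵐ[μ] fun _ => (1 : ℝ) := by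
      refine ae_le_of_forall_setIntegral_le ((hint δ).add (hint ε)) (integrable_const 1)
        fun A hA _ => ?_
      have hunion : A ×ˢ ({δ, ε} : Set Δ) = A ×ˢ {δ} ∪ A ×ˢ {ε} := by
        rw [← Set.prod_union, Set.singleton_union]
      have hdisj : Disjoint (A ×ˢ ({δ} : Set Δ)) (A ×ˢ {ε}) :=
        Set.disjoint_prod.2 (.inr (Set.disjoint_singleton.2 hne))
      have hon (γ : Δ) : IntegrableOn F (A ×ˢ {γ}) ν :=
        integrableOn_Lp_of_measure_ne_top F fact_one_le_two_ennreal.elim (hfin A γ)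
      rw [integral_add (hint δ).integrableOn (hint ε).integrableOn,
        ← setIntegral_prod_singleton_count F A, ← setIntegral_prod_singleton_count F A,
        ← setIntegral_union hdisj (hA.prod (measurableSet_singleton ε)) (hon δ) (hon ε),
        ← hunion, setIntegral_const, smul_eq_mul, mul_one]
      refine hle (hA.prod (Set.to_countable _).measurableSet) ?_ fun g =>
        (horbit g hA _).trans_le (measureReal_mono Set.inter_subset_left)
      rw [hunion]
      exact measure_union_ne_top (hfin A δ) (hfin A ε)
    filter_upwards [key] with x hx _ using hx
  · rw [← setIntegral_univ, ← setIntegral_prod_singleton_count F Set.univ]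
    refine hge hE hνE fun g => (hc g).trans_eq ?_
    rw [horbit g .univ]
    congr 1
    ext x
    simp [inv_mul_eq_one]

end Cocycle

theorem stmt12 {G X Δ : Type*} [Group G] [Group Δ] [Countable Δ]
    [MeasurableSpace Δ] [MeasurableSingletonClass Δ]
    [MulAction G X] [MeasurableSpace X] (μ : Measure X) [IsProbabilityMeasure μ]
    (hG : ∀ g : G, MeasurePreserving (fun x : X => g • x) μ μ)
    (herg : ∀ A : Set X, MeasurableSet A →
      (∀ g : G, (fun x : X => g • x) ⁻¹' A =ᵐ[μ] A) → μ A = 0 ∨ μ A = 1)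
    (w₁ w₂ : G → X → Δ)
    (hw₁meas : ∀ g : G, Measurable (w₁ g)) (hw₂meas : ∀ g : G, Measurable (w₂ g))
    (hw₁ : ∀ (g h : G) (x : X), w₁ (g * h) x = w₁ g (h • x) * w₁ h x)
    (hw₂ : ∀ (g h : G) (x : X), w₂ (g * h) x = w₂ g (h • x) * w₂ h x)
    (hd : (⨆ g : G, μ {x | w₁ g x ≠ w₂ g x}) < 1 / 8) :
    ∃ φ : X → Δ, Measurable φ ∧ 3 / 4 < μ {x | φ x = 1} ∧
      ∀ g : G, ∀ᵐ x ∂μ, w₁ g x = φ (g • x) * w₂ g x * (φ x)⁻¹ := by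
  classical
  set s := ⨆ g : G, μ {x | w₁ g x ≠ w₂ g x}
  have hs_top : s ≠ ⊤ := (hd.trans_le le_top).ne
  have hs_lt : s.toReal < 1 / 8 := by
    have := (ENNReal.toReal_lt_toReal hs_top (by finiteness)).2 hd
    simpa using this
  have hc g : 1 - s.toReal ≤ μ.real {x | w₁ g x = w₂ g x} := by
    have h1 := probReal_compl_eq_one_sub (μ := μ)
      (measurableSet_eq_fun (hw₁meas g) (hw₂meas g))
    have h2 : μ.real {x | w₁ g x = w₂ g x}ᶜ ≤ s.toReal :=
      ENNReal.toReal_mono hs_top (le_iSup (fun g : G => μ {x | w₁ g x ≠ w₂ g x}) g)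
    linarith
  obtain ⟨f, hfmeas, hfint, hfinv, hfle, hfadd, hfc⟩ :=
    exists_invariant_of_cocycle_close hG hw₁meas hw₂meas hw₁ hw₂ hc
  let R : Δ → Set X := fun δ => {x | 1 / 2 < f x δ}
  have hR δ : MeasurableSet (R δ) := measurableSet_lt measurable_const (hfmeas δ)
  let Q : Set X := {x | ∃! δ, x ∈ R δ}
  have hQ : MeasurableSet Q := by
    have : Q = ⋃ δ, (R δ ∩ ⋂ ε, ((R ε)ᶜ ∪ {_x | ε = δ})) := by
      ext x
      simp only [Q, ExistsUnique, Set.mem_ofPred_eq, Set.mem_iUnion, Set.mem_inter_iff,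
        Set.mem_iInter, Set.mem_union, Set.mem_compl_iff, imp_iff_not_or]
    rw [this]
    exact .iUnion fun δ => (hR δ).inter (.iInter fun ε => (hR ε).compl.union (.const _))
  have huniq : ∀ᵐ x ∂μ, x ∈ R 1 → x ∈ Q := by
    filter_upwards [hfadd] with x hx h1
    refine ⟨1, h1, fun δ hδ => by_contra fun hne => ?_⟩
    have h1' : 1 / 2 < f x 1 := h1
    have hδ' : 1 / 2 < f x δ := hδ
    linarith [hx δ 1 hne]
  have hR1 : 3 / 4 < μ.real (R 1) := by
    have hmarkov := mul_meas_ge_le_integral_of_nonneg (μ := μ) (f := fun x => 1 - f x 1)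
      (by filter_upwards [hfle] with x hx using sub_nonneg.2 (hx 1))
      ((integrable_const 1).sub (hfint 1)) (1 / 2)
    rw [integral_sub (integrable_const 1) (hfint 1), integral_const, probReal_univ,
      one_smul] at hmarkov
    have hcompl : (R 1)ᶜ = {x | 1 / 2 ≤ 1 - f x 1} := by
      ext x
      simp only [R, Set.mem_compl_iff, Set.mem_ofPred_eq, not_lt]
      constructor <;> intro h <;> linarith
    rw [← hcompl, probReal_compl_eq_one_sub (hR 1)] at hmarkov
    linarith
  have hinv (g : G) : ∀ᵐ x ∂μ, ∀ δ, g • x ∈ R (w₁ g x * δ * (w₂ g x)⁻¹) ↔ x ∈ R δ := by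
    filter_upwards [hfinv g] with x hx δ
    simp only [R, Set.mem_ofPred_eq, hx]
  have hQinv (g : G) : ∀ᵐ x ∂μ, g • x ∈ Q ↔ x ∈ Q := by
    filter_upwards [hinv g] with x hx
    let e : Δ ≃ Δ := (Equiv.mulLeft (w₁ g x)).trans (Equiv.mulRight (w₂ g x)⁻¹)
    exact (e.existsUnique_congr fun {δ} => (hx δ).symm).symm
  have hQ1 : μ Q = 1 := by
    refine (herg Q hQ fun g => ?_).resolve_left fun h0 => ?_
    · filter_upwards [hQinv g] with x hx using propext hx
    · have : μ (R 1) ≤ μ Q := measure_mono_ae huniq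
      rw [h0, nonpos_iff_eq_zero] at this
      rw [measureReal_def, this] at hR1
      norm_num at hR1
  have hQae : ∀ᵐ x ∂μ, x ∈ Q := (prob_compl_eq_zero_iff hQ).2 hQ1
  let φ : X → Δ := fun x => if h : x ∈ Q then h.choose else 1
  have hφ {x : X} (hx : x ∈ Q) (δ : Δ) : φ x = δ ↔ x ∈ R δ := by
    simp only [φ, dif_pos hx]
    have h := hx.choose_spec
    exact ⟨fun h' => h' ▸ h.1, fun h' => (h.2 δ h').symm⟩
  refine ⟨φ, measurable_to_countable' fun δ => ?_, ?_, fun g => ?_⟩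
  · have : φ ⁻¹' {δ} = Q ∩ R δ ∪ Qᶜ ∩ {_x | δ = 1} := by
      ext x
      by_cases hx : x ∈ Q
      · simp [hx, hφ hx]
      · simp [hx, φ, eq_comm]
    rw [this]
    exact (hQ.inter (hR δ)).union (hQ.compl.inter (.const _))
  · have hmono : μ (R 1) ≤ μ {x | φ x = 1} := by
      refine measure_mono_ae ?_
      filter_upwards [hQae] with x hx h1
      exact (hφ hx 1).2 h1
    refine lt_of_lt_of_le ?_ hmono
    rw [← ENNReal.toReal_lt_toReal (by finiteness) (measure_ne_top _ _)]
    simpa [measureReal_def] using hR1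
  · filter_upwards [hQae, hinv g, hQinv g] with x hx hxinv hxQ
    have h := (hφ (hxQ.2 hx) _).2 ((hxinv (φ x)).2 ((hφ hx _).1 rfl))
    rw [h]
    group
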